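/- arXiv:1905.08153 — 14 statements merged into one kernel-verified Lean document; each statement's English description precedes it below -/
import Mathlib

section
/- Let d = d₁ + d₂j where d₁, d₂ ∈ ℂ = ℝ ⊕ ℝi ⊂ ℍₛ, and suppose I_d = 0 and d ≠ 0 (so |d₁|² = |d₂|² ≠ 0 and d₁ is invertible). Let e, f ∈ ℍₛ, let k₀ = Re(d₁⁻¹e), and set a = 1 + (d₁⁻¹d₂)j, b = d₁⁻¹e − k₀a, c = d₁⁻¹f − (k₀/2)(d₁⁻¹e) + (k₀²/4)a. Then I_a = 0, Re(b) = 0, and for every x ∈ ℍₛ, ax² + bx + c = 0 holds if and only if y = x − k₀/2 satisfies dy² + ey + f = 0; in particular dy² + ey + f = 0 is solvable in ℍₛ if and only if ax² + bx + c = 0 is solvable in ℍₛ. -/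
open Quaternion

/-- The embedding of `ℂ = ℝ ⊕ ℝi` into the split quaternions. -/
def SplitQuat.cemb (z : ℂ) : ℍ[ℝ,-1,1] := ⟨z.re, z.im, 0, 0⟩

/-- `I_x = x̄x = x₀² + x₁² − x₂² − x₃²`. -/
def SplitQuat.Ix (x : ℍ[ℝ,-1,1]) : ℝ := x.re ^ 2 + x.imI ^ 2 - x.imJ ^ 2 - x.imK ^ 2

/-- The basis element `j`. -/
def SplitQuat.jq : ℍ[ℝ,-1,1] := ⟨0, 0, 1, 0⟩

open SplitQuat

theorem SplitQuat.cemb_mul_aux (z w : ℂ) : cemb (z * w) = cemb z * cemb w := by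
  ext <;> simp [cemb] <;> ring

theorem SplitQuat.cemb_one_aux : cemb 1 = 1 := by
  ext <;> simp [cemb]

theorem SplitQuat.Ix_aux (z w : ℂ) :
    Ix (cemb z + cemb w * jq) = Complex.normSq z - Complex.normSq w := by
  simp [Ix, cemb, jq, Complex.normSq_apply]; ring

/-- reduction of `dy² + ey + f = 0` with `d = d₁ + d₂ j` a nonzero
zero divisor (`I_d = 0`, `d ≠ 0`) to `ax² + bx + c = 0` with
`a = 1 + (d₁⁻¹d₂)j`, `b = d₁⁻¹e − k₀ a`, `c = d₁⁻¹f − (k₀/2)(d₁⁻¹e) + (k₀²/4)a`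
where `k₀ = Re(d₁⁻¹e)`. -/
theorem stmt1 (d₁ d₂ : ℂ) (e f : ℍ[ℝ,-1,1])
    (hI : Ix (cemb d₁ + cemb d₂ * jq) = 0)
    (hne : cemb d₁ + cemb d₂ * jq ≠ 0) :
    let d : ℍ[ℝ,-1,1] := cemb d₁ + cemb d₂ * jq
    let k₀ : ℝ := (cemb d₁⁻¹ * e).re
    let a : ℍ[ℝ,-1,1] := 1 + cemb (d₁⁻¹ * d₂) * jq
    let b : ℍ[ℝ,-1,1] := cemb d₁⁻¹ * e - (k₀ : ℍ[ℝ,-1,1]) * a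
    let c : ℍ[ℝ,-1,1] := cemb d₁⁻¹ * f - ((k₀ / 2 : ℝ) : ℍ[ℝ,-1,1]) * (cemb d₁⁻¹ * e)
        + ((k₀ ^ 2 / 4 : ℝ) : ℍ[ℝ,-1,1]) * a
    Ix a = 0 ∧ b.re = 0 ∧
    (∀ x : ℍ[ℝ,-1,1],
        a * x ^ 2 + b * x + c = 0 ↔
        d * (x - ((k₀ / 2 : ℝ) : ℍ[ℝ,-1,1])) ^ 2
            + e * (x - ((k₀ / 2 : ℝ) : ℍ[ℝ,-1,1])) + f = 0) ∧
    ((∃ y : ℍ[ℝ,-1,1], d * y ^ 2 + e * y + f = 0) ↔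
      (∃ x : ℍ[ℝ,-1,1], a * x ^ 2 + b * x + c = 0)) := by
  intro d k₀ a b c
  have hn : Complex.normSq d₁ = Complex.normSq d₂ := by
    rw [Ix_aux] at hI; linarith
  have h1 : d₁ ≠ 0 := by
    rintro rfl
    have h2 : d₂ = 0 := by
      rw [← Complex.normSq_eq_zero, ← hn]; simp
    subst h2
    apply hne
    ext <;> simp [cemb, jq]
  have hu : cemb d₁⁻¹ * cemb d₁ = 1 := by
    rw [← cemb_mul_aux, inv_mul_cancel₀ h1, cemb_one_aux]
  have hu' : cemb d₁ * cemb d₁⁻¹ = 1 := by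
    rw [← cemb_mul_aux, mul_inv_cancel₀ h1, cemb_one_aux]
  have ha : a = cemb d₁⁻¹ * d := by
    simp only [a, d, mul_add, hu, cemb_mul_aux, mul_assoc]
  have key : ∀ x : ℍ[ℝ,-1,1], a * x ^ 2 + b * x + c =
      cemb d₁⁻¹ * (d * (x - ((k₀ / 2 : ℝ) : ℍ[ℝ,-1,1])) ^ 2
            + e * (x - ((k₀ / 2 : ℝ) : ℍ[ℝ,-1,1])) + f) := by
    intro x
    have h3 : cemb d₁⁻¹ * (d * (x - ((k₀ / 2 : ℝ) : ℍ[ℝ,-1,1])) ^ 2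
            + e * (x - ((k₀ / 2 : ℝ) : ℍ[ℝ,-1,1])) + f) =
        a * (x - ((k₀ / 2 : ℝ) : ℍ[ℝ,-1,1])) ^ 2
          + (cemb d₁⁻¹ * e) * (x - ((k₀ / 2 : ℝ) : ℍ[ℝ,-1,1])) + cemb d₁⁻¹ * f := by
      rw [ha]; noncomm_ring
    rw [h3]
    simp only [b, c]
    generalize cemb d₁⁻¹ * e = E
    generalize cemb d₁⁻¹ * f = F
    generalize a = A
    generalize k₀ = k
    ext <;> simp [pow_two] <;> ring
  have main : ∀ x : ℍ[ℝ,-1,1],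
        a * x ^ 2 + b * x + c = 0 ↔
        d * (x - ((k₀ / 2 : ℝ) : ℍ[ℝ,-1,1])) ^ 2
            + e * (x - ((k₀ / 2 : ℝ) : ℍ[ℝ,-1,1])) + f = 0 := by
    intro x
    rw [key x]
    constructor
    · intro h
      have := congrArg (fun t => cemb d₁ * t) h
      simpa only [← mul_assoc (cemb d₁), hu', one_mul, mul_zero] using this
    · intro h
      rw [h, mul_zero]
  refine ⟨?_, ?_, main, ?_⟩
  · simp only [a]
    rw [← cemb_one_aux, Ix_aux, map_mul, ← hn, ← map_mul, inv_mul_cancel₀ h1, sub_self]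
  · have har : a.re = 1 := by simp [a, cemb, jq]
    have hb : b.re = k₀ - k₀ * a.re := by
      simp only [b, QuaternionAlgebra.re_sub]
      congr 1
      simp
    rw [hb, har]; ring
  · constructor
    · rintro ⟨y, hy⟩
      refine ⟨y + ((k₀ / 2 : ℝ) : ℍ[ℝ,-1,1]), (main _).2 ?_⟩
      rw [add_sub_cancel_right]; exact hy
    · rintro ⟨x, hx⟩
      exact ⟨_, (main x).1 hx⟩
end

section
/- Let w₀ ∈ ℝ, regarded as an element of ℍₛ. If w₀ ≤ 0, then x ∈ ℍₛ satisfies x² = w₀ if and only if x = x₁i + x₂j + x₃k for some x₁,x₂,x₃ ∈ ℝ with −x₁² + x₂² + x₃² = w₀. If w₀ > 0, then x ∈ ℍₛ satisfies x² = w₀ if and only if x = √w₀, or x = −√w₀, or x = x₁i + x₂j + x₃k with −x₁² + x₂² + x₃² = w₀. -/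
open Quaternion

/-- square roots of a real number `w₀` in the split quaternions.
If `w₀ ≤ 0`, then `x² = w₀` iff `x` is purely imaginary with
`−x₁² + x₂² + x₃² = w₀`; if `w₀ > 0`, then `x² = w₀` iff `x = ±√w₀` or `x` is
purely imaginary with `−x₁² + x₂² + x₃² = w₀`. -/
theorem stmt2 (w₀ : ℝ) :
    (w₀ ≤ 0 → ∀ x : ℍ[ℝ,-1,1],
        x ^ 2 = ((w₀ : ℝ) : ℍ[ℝ,-1,1]) ↔
        (x.re = 0 ∧ -x.imI ^ 2 + x.imJ ^ 2 + x.imK ^ 2 = w₀)) ∧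
    (0 < w₀ → ∀ x : ℍ[ℝ,-1,1],
        x ^ 2 = ((w₀ : ℝ) : ℍ[ℝ,-1,1]) ↔
        (x = ((Real.sqrt w₀ : ℝ) : ℍ[ℝ,-1,1]) ∨
          x = -((Real.sqrt w₀ : ℝ) : ℍ[ℝ,-1,1]) ∨
          (x.re = 0 ∧ -x.imI ^ 2 + x.imJ ^ 2 + x.imK ^ 2 = w₀))) := by
  have key : ∀ x : ℍ[ℝ,-1,1], x ^ 2 = ((w₀ : ℝ) : ℍ[ℝ,-1,1]) ↔
      (x.re ^ 2 - x.imI ^ 2 + x.imJ ^ 2 + x.imK ^ 2 = w₀ ∧ x.re * x.imI = 0 ∧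
        x.re * x.imJ = 0 ∧ x.re * x.imK = 0) := by
    intro x
    rw [pow_two, QuaternionAlgebra.ext_iff]
    simp only [QuaternionAlgebra.re_mul, QuaternionAlgebra.imI_mul, QuaternionAlgebra.imJ_mul,
      QuaternionAlgebra.imK_mul, QuaternionAlgebra.re_coe, QuaternionAlgebra.imI_coe,
      QuaternionAlgebra.imJ_coe, QuaternionAlgebra.imK_coe]
    constructor
    · rintro ⟨h1, h2, h3, h4⟩
      refine ⟨?_, ?_, ?_, ?_⟩ <;> linarith
    · rintro ⟨h1, h2, h3, h4⟩
      refine ⟨?_, ?_, ?_, ?_⟩ <;> linarith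
  refine ⟨fun hw x => ?_, fun hw x => ?_⟩
  · rw [key]
    constructor
    · rintro ⟨h1, h2, h3, h4⟩
      by_cases h : x.re = 0
      · refine ⟨h, ?_⟩
        rw [h] at h1
        linarith
      · simp only [mul_eq_zero, h, false_or] at h2 h3 h4
        rw [h2, h3, h4] at h1
        have : 0 < x.re ^ 2 := by positivity
        linarith
    · rintro ⟨h, h1⟩
      rw [h]
      refine ⟨?_, ?_, ?_, ?_⟩ <;> linarith
  · have hs := Real.sq_sqrt hw.le
    constructor
    · rw [key]
      rintro ⟨h1, h2, h3, h4⟩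
      by_cases h : x.re = 0
      · refine Or.inr (Or.inr ⟨h, ?_⟩)
        rw [h] at h1
        linarith
      · simp only [mul_eq_zero, h, false_or] at h2 h3 h4
        rw [h2, h3, h4] at h1
        have h5 : x.re ^ 2 = Real.sqrt w₀ ^ 2 := by linarith
        rcases sq_eq_sq_iff_eq_or_eq_neg.mp h5 with h6 | h6
        · left
          ext <;> simp [h2, h3, h4, h6]
        · right; left
          ext <;> simp [h2, h3, h4, h6]
    · rintro (h | h | ⟨h, h1⟩)
      · rw [key, h]
        simp [hs]
      · rw [key, h]
        simp [hs]
      · rw [key, h]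
        refine ⟨?_, ?_, ?_, ?_⟩ <;> linarith
end

section
/- Let w ∈ ℍₛ with w ∉ ℝ and write w₀ = Re(w). Then there exists x ∈ ℍₛ with x² = w if and only if I_w ≥ 0 and w₀ + √(I_w) > 0. -/
open Quaternion

open SplitQuat

/-- for a non-real split quaternion `w`, a square root of `w`
exists iff `I_w ≥ 0` and `Re w + √(I_w) > 0`. -/
theorem stmt3 (w : ℍ[ℝ,-1,1]) (hw : ∀ r : ℝ, w ≠ (r : ℍ[ℝ,-1,1])) :
    (∃ x : ℍ[ℝ,-1,1], x ^ 2 = w) ↔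
      (0 ≤ Ix w ∧ 0 < w.re + Real.sqrt (Ix w)) := by
  constructor
  · rintro ⟨x, rfl⟩
    have hre : (x ^ 2).re = x.re^2 - x.imI^2 + x.imJ^2 + x.imK^2 := by
      rw [pow_two]; simp; ring
    have hI : (x ^ 2).imI = 2 * x.re * x.imI := by
      rw [pow_two]; simp; ring
    have hJ : (x ^ 2).imJ = 2 * x.re * x.imJ := by
      rw [pow_two]; simp; ring
    have hK : (x ^ 2).imK = 2 * x.re * x.imK := by
      rw [pow_two]; simp; ring
    have h0 : x.re ≠ 0 := by
      intro h
      apply hw (x ^ 2).re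
      ext
      · simp
      · rw [hI, h]; simp
      · rw [hJ, h]; simp
      · rw [hK, h]; simp
    have hs : Ix (x ^ 2) = (Ix x) ^ 2 := by
      unfold Ix; rw [hre, hI, hJ, hK]; ring
    rw [hs, Real.sqrt_sq_eq_abs, hre]
    refine ⟨sq_nonneg _, ?_⟩
    have h1 := le_abs_self (Ix x)
    have h2 : 0 < x.re ^ 2 := by positivity
    have h3 : Ix x = x.re ^ 2 + x.imI ^ 2 - x.imJ ^ 2 - x.imK ^ 2 := rfl
    linarith
  · rintro ⟨h0, h1⟩
    have hs := Real.sq_sqrt h0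
    set s := Real.sqrt (Ix w) with hsdef
    have h3 : Ix w = w.re ^ 2 + w.imI ^ 2 - w.imJ ^ 2 - w.imK ^ 2 := rfl
    have ht : Real.sqrt ((w.re + s) / 2) ^ 2 = (w.re + s) / 2 := Real.sq_sqrt (by linarith)
    have htp : 0 < Real.sqrt ((w.re + s) / 2) := Real.sqrt_pos.2 (by linarith)
    set t := Real.sqrt ((w.re + s) / 2) with htdef
    clear_value t s
    have ht0 : t ≠ 0 := htp.ne'
    have hs2 : s = 2 * t ^ 2 - w.re := by linarith
    rw [h3, hs2] at hs
    refine ⟨⟨t, w.imI / (2 * t), w.imJ / (2 * t), w.imK / (2 * t)⟩, ?_⟩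
    rw [pow_two]
    ext
    · simp
      field_simp
      linarith
    · simp
      field_simp
      ring
    · simp
      field_simp
      ring
    · simp
      field_simp
      ring
end

section
/- Let w ∈ ℍₛ with w ∉ ℝ, write w₀ = Re(w), and assume I_w ≥ 0. (i) If w₀ − √(I_w) > 0, then x ∈ ℍₛ satisfies x² = w if and only if x = ±(w + √(I_w))/√(2(w₀ + √(I_w))) or x = ±(w − √(I_w))/√(2(w₀ − √(I_w))). (ii) If w₀ + √(I_w) > 0 ≥ w₀ − √(I_w), then x² = w if and only if x = ±(√(I_w) + w)/√(2(w₀ + √(I_w))). -/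
open Quaternion

open SplitQuat

theorem back_aux (w : ℍ[ℝ,-1,1]) (t p : ℝ) (ht : t ^ 2 = Ix w)
    (hp : p ^ 2 * (2 * (w.re + t)) = 1) :
    (((p : ℝ) : ℍ[ℝ,-1,1]) * (w + ((t : ℝ) : ℍ[ℝ,-1,1]))) ^ 2 = w := by
  unfold Ix at ht
  rw [pow_two]
  ext <;> simp
  · linear_combination w.re * hp + p ^ 2 * ht
  · linear_combination w.imI * hp
  · linear_combination w.imJ * hp
  · linear_combination w.imK * hp

theorem fwd_aux (w x : ℍ[ℝ,-1,1]) (hw : ∀ r : ℝ, w ≠ (r : ℍ[ℝ,-1,1]))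
    (h : x ^ 2 = w) : ∃ t : ℝ, t ^ 2 = Ix w ∧ 0 < w.re + t ∧
      (x = (((Real.sqrt (2 * (w.re + t)))⁻¹ : ℝ) : ℍ[ℝ,-1,1]) * (w + ((t : ℝ) : ℍ[ℝ,-1,1])) ∨
       x = -((((Real.sqrt (2 * (w.re + t)))⁻¹ : ℝ) : ℍ[ℝ,-1,1]) * (w + ((t : ℝ) : ℍ[ℝ,-1,1])))) := by
  rw [pow_two] at h
  have h0 := congrArg QuaternionAlgebra.re h
  have h1 := congrArg QuaternionAlgebra.imI h
  have h2 := congrArg QuaternionAlgebra.imJ h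
  have h3 := congrArg QuaternionAlgebra.imK h
  simp at h0 h1 h2 h3
  have ha : x.re ≠ 0 := by
    intro ha
    apply hw w.re
    ext <;> simp
    · rw [← h1, ha]; ring
    · rw [← h2, ha]; ring
    · rw [← h3, ha]; ring
  have hD : 2 * (w.re + Ix x) = (2 * x.re) ^ 2 := by
    unfold Ix; rw [← h0]; ring
  have hpos : 0 < x.re ^ 2 := by positivity
  refine ⟨Ix x, ?_, by nlinarith, ?_⟩
  · unfold Ix; rw [← h0, ← h1, ← h2, ← h3]; ring
  · rw [hD, Real.sqrt_sq_eq_abs]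
    rcases abs_choice (2 * x.re) with e | e <;> rw [e]
    · left
      ext <;> simp <;> field_simp <;> try unfold Ix
      · linear_combination h0
      · linear_combination h1
      · linear_combination h2
      · linear_combination h3
    · right
      ext <;> simp <;> field_simp <;> try unfold Ix
      · linear_combination h0
      · linear_combination h1
      · linear_combination h2
      · linear_combination h3

theorem p_aux (d : ℝ) (h : 0 < d) : ((Real.sqrt (2 * d))⁻¹) ^ 2 * (2 * d) = 1 := by
  rw [inv_pow, Real.sq_sqrt (by positivity)]
  field_simp

/-- explicit square roots of a non-real split quaternion `w` with
`I_w ≥ 0`. (i) If `w₀ − √(I_w) > 0`, then `x² = w` iff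
`x = ±(w + √(I_w))/√(2(w₀ + √(I_w)))` or `x = ±(w − √(I_w))/√(2(w₀ − √(I_w)))`.
(ii) If `w₀ + √(I_w) > 0 ≥ w₀ − √(I_w)`, then `x² = w` iff
`x = ±(√(I_w) + w)/√(2(w₀ + √(I_w)))`. -/
theorem stmt4 (w : ℍ[ℝ,-1,1]) (hw : ∀ r : ℝ, w ≠ (r : ℍ[ℝ,-1,1]))
    (hI : 0 ≤ Ix w) :
    let s : ℝ := Real.sqrt (Ix w)
    let p : ℝ := (Real.sqrt (2 * (w.re + s)))⁻¹
    let q : ℝ := (Real.sqrt (2 * (w.re - s)))⁻¹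
    (0 < w.re - s → ∀ x : ℍ[ℝ,-1,1],
        x ^ 2 = w ↔
        (x = ((p : ℝ) : ℍ[ℝ,-1,1]) * (w + ((s : ℝ) : ℍ[ℝ,-1,1])) ∨
          x = -(((p : ℝ) : ℍ[ℝ,-1,1]) * (w + ((s : ℝ) : ℍ[ℝ,-1,1]))) ∨
          x = ((q : ℝ) : ℍ[ℝ,-1,1]) * (w - ((s : ℝ) : ℍ[ℝ,-1,1])) ∨
          x = -(((q : ℝ) : ℍ[ℝ,-1,1]) * (w - ((s : ℝ) : ℍ[ℝ,-1,1]))))) ∧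
    (0 < w.re + s → w.re - s ≤ 0 → ∀ x : ℍ[ℝ,-1,1],
        x ^ 2 = w ↔
        (x = ((p : ℝ) : ℍ[ℝ,-1,1]) * (((s : ℝ) : ℍ[ℝ,-1,1]) + w) ∨
          x = -(((p : ℝ) : ℍ[ℝ,-1,1]) * (((s : ℝ) : ℍ[ℝ,-1,1]) + w)))) := by
  intro s p q
  have hs : s ^ 2 = Ix w := Real.sq_sqrt hI
  have hs0 : 0 ≤ s := Real.sqrt_nonneg _
  have B1 : 0 < w.re + s → (((p : ℝ) : ℍ[ℝ,-1,1]) * (w + ((s : ℝ) : ℍ[ℝ,-1,1]))) ^ 2 = w :=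
    fun h => back_aux w s p hs (p_aux _ h)
  have B2 : 0 < w.re - s → (((q : ℝ) : ℍ[ℝ,-1,1]) * (w - ((s : ℝ) : ℍ[ℝ,-1,1]))) ^ 2 = w := by
    intro h
    have := back_aux w (-s) q (by rw [neg_sq, hs]) (by rw [← sub_eq_add_neg]; exact p_aux _ h)
    rwa [QuaternionAlgebra.coe_neg, ← sub_eq_add_neg] at this
  refine ⟨fun h x => ⟨fun hx => ?_, ?_⟩, fun h h' x => ⟨fun hx => ?_, ?_⟩⟩
  · obtain ⟨t, ht, hp, H⟩ := fwd_aux w x hw hx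
    rcases sq_eq_sq_iff_eq_or_eq_neg.1 (ht.trans hs.symm) with rfl | rfl
    · rcases H with H | H
      · exact Or.inl H
      · exact Or.inr (Or.inl H)
    · rw [QuaternionAlgebra.coe_neg, ← sub_eq_add_neg, ← sub_eq_add_neg] at H
      exact Or.inr (Or.inr H)
  · rintro (rfl | rfl | rfl | rfl)
    · exact B1 (by linarith)
    · rw [neg_sq]; exact B1 (by linarith)
    · exact B2 h
    · rw [neg_sq]; exact B2 h
  · obtain ⟨t, ht, hp, H⟩ := fwd_aux w x hw hx
    rcases sq_eq_sq_iff_eq_or_eq_neg.1 (ht.trans hs.symm) with rfl | rfl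
    · rw [add_comm w] at H
      exact H
    · linarith
  · rw [add_comm _ w]
    rintro (rfl | rfl)
    · exact B1 h
    · rw [neg_sq]; exact B1 h
end

section
/- Let b ∈ ℝ and let c = c₀ + c₁i + c₂j + c₃k ∈ ℍₛ with c ∉ ℝ. Assume Δ := (b² − 4c₀)² − 16M_c ≥ 0 and (b² − 4c₀ − √Δ)/2 > 0, and set ρ₁ = √((b² − 4c₀ + √Δ)/2) and ρ₂ = √((b² − 4c₀ − √Δ)/2). Then for each index m ∈ {1,2}, the split quaternions x = (−b + ρₘ)/2 − (1/ρₘ)(c₁i + c₂j + c₃k) and x = (−b − ρₘ)/2 + (1/ρₘ)(c₁i + c₂j + c₃k) satisfy x² + bx + c = 0. -/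
open Quaternion

/-- quadratic formula for `x² + bx + c = 0` with real `b` and
non-real `c = c₀ + c₁i + c₂j + c₃k`, under `Δ = (b² − 4c₀)² − 16 M_c ≥ 0` and
`(b² − 4c₀ − √Δ)/2 > 0`: for `ρ ∈ {ρ₁, ρ₂}`, both
`x = (−b + ρ)/2 − ρ⁻¹(c₁i + c₂j + c₃k)` and
`x = (−b − ρ)/2 + ρ⁻¹(c₁i + c₂j + c₃k)` are roots. -/
theorem stmt5 (b c₀ c₁ c₂ c₃ : ℝ)
    (hc : ¬(c₁ = 0 ∧ c₂ = 0 ∧ c₃ = 0))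
    (hΔ : 0 ≤ (b ^ 2 - 4 * c₀) ^ 2 - 16 * (-c₁ ^ 2 + c₂ ^ 2 + c₃ ^ 2))
    (hpos : 0 < (b ^ 2 - 4 * c₀ -
        Real.sqrt ((b ^ 2 - 4 * c₀) ^ 2 - 16 * (-c₁ ^ 2 + c₂ ^ 2 + c₃ ^ 2))) / 2) :
    let c : ℍ[ℝ,-1,1] := ⟨c₀, c₁, c₂, c₃⟩
    let cim : ℍ[ℝ,-1,1] := ⟨0, c₁, c₂, c₃⟩
    let Δ : ℝ := (b ^ 2 - 4 * c₀) ^ 2 - 16 * (-c₁ ^ 2 + c₂ ^ 2 + c₃ ^ 2)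
    let ρ₁ : ℝ := Real.sqrt ((b ^ 2 - 4 * c₀ + Real.sqrt Δ) / 2)
    let ρ₂ : ℝ := Real.sqrt ((b ^ 2 - 4 * c₀ - Real.sqrt Δ) / 2)
    ∀ ρ : ℝ, (ρ = ρ₁ ∨ ρ = ρ₂) →
      ((((-b + ρ) / 2 : ℝ) : ℍ[ℝ,-1,1]) - ((ρ⁻¹ : ℝ) : ℍ[ℝ,-1,1]) * cim) ^ 2
          + ((b : ℝ) : ℍ[ℝ,-1,1]) *
            ((((-b + ρ) / 2 : ℝ) : ℍ[ℝ,-1,1]) - ((ρ⁻¹ : ℝ) : ℍ[ℝ,-1,1]) * cim) + c = 0 ∧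
      ((((-b - ρ) / 2 : ℝ) : ℍ[ℝ,-1,1]) + ((ρ⁻¹ : ℝ) : ℍ[ℝ,-1,1]) * cim) ^ 2
          + ((b : ℝ) : ℍ[ℝ,-1,1]) *
            ((((-b - ρ) / 2 : ℝ) : ℍ[ℝ,-1,1]) + ((ρ⁻¹ : ℝ) : ℍ[ℝ,-1,1]) * cim) + c = 0 := by
  intro c cim Δ ρ₁ ρ₂ ρ hρ
  have hsq : Real.sqrt Δ ^ 2 = Δ := Real.sq_sqrt hΔ
  have hs0 : 0 ≤ Real.sqrt Δ := Real.sqrt_nonneg _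
  have hpos' : 0 < (b ^ 2 - 4 * c₀ - Real.sqrt Δ) / 2 := hpos
  have hpos1 : 0 < (b ^ 2 - 4 * c₀ + Real.sqrt Δ) / 2 := by linarith
  have hΔd : Δ = (b ^ 2 - 4 * c₀) ^ 2 - 16 * (-c₁ ^ 2 + c₂ ^ 2 + c₃ ^ 2) := rfl
  have h0 : 0 < ρ := by
    rcases hρ with h | h
    · rw [h]; exact Real.sqrt_pos.2 hpos1
    · rw [h]; exact Real.sqrt_pos.2 hpos'
  have h4 : ρ ^ 2 * ρ ^ 2 - (b ^ 2 - 4 * c₀) * ρ ^ 2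
      + 4 * (-c₁ ^ 2 + c₂ ^ 2 + c₃ ^ 2) = 0 := by
    rcases hρ with h | h
    · have : ρ ^ 2 = (b ^ 2 - 4 * c₀ + Real.sqrt Δ) / 2 := by
        rw [h]; exact Real.sq_sqrt hpos1.le
      rw [this]; linear_combination (1 / 4) * hsq + (1 / 4) * hΔd
    · have : ρ ^ 2 = (b ^ 2 - 4 * c₀ - Real.sqrt Δ) / 2 := by
        rw [h]; exact Real.sq_sqrt hpos'.le
      rw [this]; linear_combination (1 / 4) * hsq + (1 / 4) * hΔd
  clear_value Δ ρ₁ ρ₂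
  have hs : ρ * ρ⁻¹ = 1 := mul_inv_cancel₀ h0.ne'
  generalize ρ⁻¹ = s at hs ⊢
  have key : ρ ^ 2 - (b ^ 2 - 4 * c₀) + 4 * (-c₁ ^ 2 + c₂ ^ 2 + c₃ ^ 2) * s ^ 2 = 0 := by
    have hs2 : ρ ^ 2 * s ^ 2 = 1 := by rw [← mul_pow, hs, one_pow]
    linear_combination s ^ 2 * h4 - (ρ ^ 2 - (b ^ 2 - 4 * c₀)) * hs2
  constructor
  · ext <;> simp [c, cim, pow_two]
    · linear_combination (1 / 4) * key
    · linear_combination -c₁ * hs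
    · linear_combination -c₂ * hs
    · linear_combination -c₃ * hs
  · ext <;> simp [c, cim, pow_two]
    · linear_combination (1 / 4) * key
    · linear_combination -c₁ * hs
    · linear_combination -c₂ * hs
    · linear_combination -c₃ * hs
end

section
/- Let B, E, D ∈ ℝ with D ≠ 0, and set F₁ = (−2B³ + 2(B² + 12E)^{3/2})/27 + 8EB/3 − D² and F₂ = (−2B³ − 2(B² + 12E)^{3/2})/27 + 8EB/3 − D². If one of the following holds: (i) B² + 12E ≤ 0; (ii) B² + 12E > 0 and B ≥ 0; (iii) B < 0 and B² − 4E < 0; (iv) B² + 12E > 0, B < 0, B² − 4E > 0 and F₁ < 0; (v) B² + 12E > 0, B < 0, B² − 4E > 0 and F₂ > 0 — then the cubic equation z³ + 2Bz² + (B² − 4E)z − D² = 0 has exactly one real solution z in the interval (0, ∞). -/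
/-- under any of the conditions (i)–(v), the cubic
`z³ + 2Bz² + (B² − 4E)z − D² = 0` (with `D ≠ 0`) has exactly one solution in
`(0, ∞)`. Here `(B² + 12E)^{3/2}` is `(√(B² + 12E))³`. -/
theorem stmt8 (B E D : ℝ) (hD : D ≠ 0) :
    let F₁ : ℝ := (-2 * B ^ 3 + 2 * (Real.sqrt (B ^ 2 + 12 * E)) ^ 3) / 27
        + 8 * E * B / 3 - D ^ 2
    let F₂ : ℝ := (-2 * B ^ 3 - 2 * (Real.sqrt (B ^ 2 + 12 * E)) ^ 3) / 27
        + 8 * E * B / 3 - D ^ 2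
    (B ^ 2 + 12 * E ≤ 0 ∨
      (0 < B ^ 2 + 12 * E ∧ 0 ≤ B) ∨
      (B < 0 ∧ B ^ 2 - 4 * E < 0) ∨
      (0 < B ^ 2 + 12 * E ∧ B < 0 ∧ 0 < B ^ 2 - 4 * E ∧ F₁ < 0) ∨
      (0 < B ^ 2 + 12 * E ∧ B < 0 ∧ 0 < B ^ 2 - 4 * E ∧ 0 < F₂)) →
    ∃! z : ℝ, 0 < z ∧ z ^ 3 + 2 * B * z ^ 2 + (B ^ 2 - 4 * E) * z - D ^ 2 = 0 := by
  intro F₁ F₂ h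
  have hD2 : 0 < D ^ 2 := by positivity
  obtain ⟨z, hz, hz0⟩ : ∃ z : ℝ, 0 < z ∧
      z ^ 3 + 2 * B * z ^ 2 + (B ^ 2 - 4 * E) * z - D ^ 2 = 0 := by
    set M : ℝ := 1 + 2 * |B| + |B ^ 2 - 4 * E| + D ^ 2 with hM
    have h1 := abs_nonneg B
    have h2 := abs_nonneg (B ^ 2 - 4 * E)
    have hM1 : 1 ≤ M := by linarith
    have hcont : ContinuousOn (fun z : ℝ =>
        z ^ 3 + 2 * B * z ^ 2 + (B ^ 2 - 4 * E) * z - D ^ 2) (Set.Icc 0 M) := by fun_prop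
    have hpos : 0 ≤ M ^ 3 + 2 * B * M ^ 2 + (B ^ 2 - 4 * E) * M - D ^ 2 := by
      have h3 := neg_abs_le B
      have h4 := neg_abs_le (B ^ 2 - 4 * E)
      have hMM : M ≤ M ^ 2 := by nlinarith
      have e1 : -|B| * M ^ 2 ≤ B * M ^ 2 := mul_le_mul_of_nonneg_right h3 (by positivity)
      have e2 : -|B ^ 2 - 4 * E| * M ≤ (B ^ 2 - 4 * E) * M :=
        mul_le_mul_of_nonneg_right h4 (by linarith)
      have e3 : |B ^ 2 - 4 * E| * M ≤ |B ^ 2 - 4 * E| * M ^ 2 :=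
        mul_le_mul_of_nonneg_left hMM h2
      have e4 : D ^ 2 * 1 ≤ D ^ 2 * M ^ 2 :=
        mul_le_mul_of_nonneg_left (by linarith) hD2.le
      have e5 : M ^ 3 = (1 + 2 * |B| + |B ^ 2 - 4 * E| + D ^ 2) * M ^ 2 := by
        rw [← hM]; ring
      have e6 : 0 ≤ M ^ 2 := by positivity
      rw [e5]
      linarith
    have := intermediate_value_Icc (by linarith : (0:ℝ) ≤ M) hcont
    obtain ⟨z, hz, hz0⟩ := this (show (0:ℝ) ∈ Set.Icc _ _ from ⟨by simp; positivity, hpos⟩)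
    refine ⟨z, ?_, hz0⟩
    rcases hz.1.lt_or_eq with h | h
    · exact h
    · subst h
      simp at hz0
      exact absurd hz0 hD
  refine ⟨z, ⟨hz, hz0⟩, ?_⟩
  rintro y ⟨hy, hy0⟩
  by_contra hne
  have hsub : y - z ≠ 0 := sub_ne_zero.mpr hne
  obtain ⟨c, hc⟩ : ∃ c, c = -2 * B - y - z := ⟨_, rfl⟩
  have hB : B = -(y + z + c) / 2 := by rw [hc]; ring
  have he2 : B ^ 2 - 4 * E = y * z + y * c + z * c := by
    apply mul_left_cancel₀ hsub
    rw [hc]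
    linear_combination hy0 - hz0
  have he3 : D ^ 2 = y * z * c := by
    rw [he2, hB] at hy0
    linear_combination -hy0
  have hcpos : 0 < c := by
    have : 0 < y * z * c := he3 ▸ hD2
    exact (mul_pos_iff_of_pos_left (mul_pos hy hz)).mp this
  have hBneg : B < 0 := by rw [hB]; linarith
  have he2pos : 0 < B ^ 2 - 4 * E := by rw [he2]; positivity
  have hs : B ^ 2 + 12 * E = ((y - z) ^ 2 + (y - c) ^ 2 + (z - c) ^ 2) / 2 := by
    have : B ^ 2 + 12 * E = 4 * B ^ 2 - 3 * (B ^ 2 - 4 * E) := by ring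
    rw [this, he2, hB]; ring
  have hspos : 0 < B ^ 2 + 12 * E := by rw [hs]; positivity
  have hsq := Real.sq_sqrt hspos.le
  have hsp := Real.sqrt_pos.mpr hspos
  set s := Real.sqrt (B ^ 2 + 12 * E) with hsdef
  have hs3 : 0 < s ^ 3 := by positivity
  have hlt : F₂ < F₁ := by simp only [F₁, F₂]; linarith
  have hE : E = (B ^ 2 - (y * z + y * c + z * c)) / 4 := by linarith
  have hprod : F₁ * F₂ ≤ 0 := by
    have h6 : (s ^ 3) ^ 2 = (B ^ 2 + 12 * E) ^ 3 := by rw [← hsq]; ring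
    have : F₁ * F₂ = -((y - z) * (y - c) * (z - c)) ^ 2 / 27 := by
      have : F₁ * F₂ = (-2 * B ^ 3 / 27 + 8 * E * B / 3 - D ^ 2) ^ 2
          - 4 * (s ^ 3) ^ 2 / 729 := by simp only [F₁, F₂]; ring
      rw [this, h6, he3, hE, hB]; ring
    rw [this]
    have := sq_nonneg ((y - z) * (y - c) * (z - c))
    linarith
  rcases h with h | ⟨_, h⟩ | ⟨_, h⟩ | ⟨_, _, _, h⟩ | ⟨_, _, _, h⟩
  · linarith
  · linarith
  · linarith
  · have := mul_pos_of_neg_of_neg h (hlt.trans h)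
    linarith
  · have := mul_pos (h.trans hlt) h
    linarith
end

section
/- Let B, E, D ∈ ℝ with D ≠ 0 and B² + 12E > 0, B < 0, B² − 4E > 0, and set F₁ = (−2B³ + 2(B² + 12E)^{3/2})/27 + 8EB/3 − D² and F₂ = (−2B³ − 2(B² + 12E)^{3/2})/27 + 8EB/3 − D². If F₁ = 0 or F₂ = 0, then the cubic equation z³ + 2Bz² + (B² − 4E)z − D² = 0 has exactly two real solutions in (0, ∞). If F₁ > 0 > F₂, then it has exactly three real solutions in (0, ∞). -/
/-- with `D ≠ 0`, `B² + 12E > 0`, `B < 0`, `B² − 4E > 0`: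
if `F₁ = 0` or `F₂ = 0` then the cubic `z³ + 2Bz² + (B² − 4E)z − D² = 0` has
exactly two solutions in `(0, ∞)`; if `F₁ > 0 > F₂` it has exactly three. -/
theorem stmt9 (B E D : ℝ) (hD : D ≠ 0)
    (h1 : 0 < B ^ 2 + 12 * E) (h2 : B < 0) (h3 : 0 < B ^ 2 - 4 * E) :
    let F₁ : ℝ := (-2 * B ^ 3 + 2 * (Real.sqrt (B ^ 2 + 12 * E)) ^ 3) / 27
        + 8 * E * B / 3 - D ^ 2
    let F₂ : ℝ := (-2 * B ^ 3 - 2 * (Real.sqrt (B ^ 2 + 12 * E)) ^ 3) / 27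
        + 8 * E * B / 3 - D ^ 2
    ((F₁ = 0 ∨ F₂ = 0) →
      {z : ℝ | 0 < z ∧ z ^ 3 + 2 * B * z ^ 2 + (B ^ 2 - 4 * E) * z - D ^ 2 = 0}.ncard = 2) ∧
    (F₁ > 0 ∧ 0 > F₂ →
      {z : ℝ | 0 < z ∧ z ^ 3 + 2 * B * z ^ 2 + (B ^ 2 - 4 * E) * z - D ^ 2 = 0}.ncard = 3) := by
  intro F₁ F₂
  obtain ⟨s, hs⟩ : ∃ s, s = Real.sqrt (B ^ 2 + 12 * E) := ⟨_, rfl⟩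
  have hs0 : 0 < s := by rw [hs]; exact Real.sqrt_pos.mpr h1
  have hs2 : s ^ 2 = B ^ 2 + 12 * E := by rw [hs]; exact Real.sq_sqrt h1.le
  have hE : E = (s ^ 2 - B ^ 2) / 12 := by linarith
  have hsB : s < -2 * B := by nlinarith
  have hDp : 0 < D ^ 2 := by positivity
  have e1 : F₁ = (-2 * B ^ 3 + 2 * s ^ 3) / 27 + 8 * E * B / 3 - D ^ 2 := by
    simp only [F₁, hs]
  have e2 : F₂ = (-2 * B ^ 3 - 2 * s ^ 3) / 27 + 8 * E * B / 3 - D ^ 2 := by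
    simp only [F₂, hs]
  rw [e1, e2]
  clear e1 e2 F₁ F₂ hs hs2
  subst hE
  constructor
  · rintro (h | h)
    · rw [Set.ncard_eq_two]
      refine ⟨(-2 * B - s) / 3, (-2 * B + 2 * s) / 3, ?_, ?_⟩
      · intro h; linarith
      · ext z
        have key : z ^ 3 + 2 * B * z ^ 2 + (B ^ 2 - 4 * ((s ^ 2 - B ^ 2) / 12)) * z - D ^ 2
            = (z - (-2 * B - s) / 3) ^ 2 * (z - (-2 * B + 2 * s) / 3) := by
          linear_combination h
        simp only [Set.mem_ofPred_eq, Set.mem_insert_iff, Set.mem_singleton_iff, key]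
        simp only [mul_eq_zero, pow_eq_zero_iff two_ne_zero, sub_eq_zero]
        constructor
        · exact fun h => h.2
        · intro h
          refine ⟨?_, h⟩
          rcases h with h | h <;> rw [h] <;> linarith
    · rw [Set.ncard_eq_two]
      have key : ∀ z : ℝ, z ^ 3 + 2 * B * z ^ 2 + (B ^ 2 - 4 * ((s ^ 2 - B ^ 2) / 12)) * z - D ^ 2
          = (z - (-2 * B + s) / 3) ^ 2 * (z - (-2 * B - 2 * s) / 3) := by
        intro z
        linear_combination h
      have hp : 0 < (-2 * B - 2 * s) / 3 := by
        have h0 := key 0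
        by_contra hn
        have : 0 ≤ ((0:ℝ) - (-2 * B + s) / 3) ^ 2 * (0 - (-2 * B - 2 * s) / 3) :=
          mul_nonneg (sq_nonneg _) (by linarith)
        linarith
      refine ⟨(-2 * B + s) / 3, (-2 * B - 2 * s) / 3, ?_, ?_⟩
      · intro h; linarith
      · ext z
        simp only [Set.mem_ofPred_eq, Set.mem_insert_iff, Set.mem_singleton_iff, key]
        simp only [mul_eq_zero, pow_eq_zero_iff two_ne_zero, sub_eq_zero]
        constructor
        · exact fun h => h.2
        · intro h
          refine ⟨?_, h⟩
          rcases h with h | h <;> rw [h] <;> linarith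
  · rintro ⟨hF1, hF2⟩
    obtain ⟨K, hK⟩ : ∃ K, K = B ^ 2 - 4 * ((s ^ 2 - B ^ 2) / 12) := ⟨_, rfl⟩
    rw [← hK]
    obtain ⟨f, hf⟩ : ∃ f : ℝ → ℝ, f = fun z => z ^ 3 + 2 * B * z ^ 2 + K * z - D ^ 2 := ⟨_, rfl⟩
    have hc : Continuous f := by rw [hf]; fun_prop
    have f0 : f 0 < 0 := by simp only [hf]; linarith
    have f1 : 0 < f ((-2 * B - s) / 3) := by
      simp only [hf, hK]; linear_combination hF1
    have f2 : f ((-2 * B + s) / 3) < 0 := by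
      simp only [hf, hK]; linear_combination hF2
    have f3 : 0 < f ((-2 * B + 2 * s) / 3) := by
      simp only [hf, hK]; linear_combination hF1
    obtain ⟨a, ⟨ha1, ha2⟩, ha⟩ := intermediate_value_Ioo (by linarith) hc.continuousOn
      (show (0:ℝ) ∈ Set.Ioo (f 0) (f ((-2 * B - s) / 3)) from ⟨f0, f1⟩)
    obtain ⟨b, ⟨hb1, hb2⟩, hb⟩ := intermediate_value_Ioo' (by linarith) hc.continuousOn
      (show (0:ℝ) ∈ Set.Ioo (f ((-2 * B + s) / 3)) (f ((-2 * B - s) / 3)) from ⟨f2, f1⟩)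
    obtain ⟨c, ⟨hc1, hc2⟩, hcc⟩ := intermediate_value_Ioo (by linarith) hc.continuousOn
      (show (0:ℝ) ∈ Set.Ioo (f ((-2 * B + s) / 3)) (f ((-2 * B + 2 * s) / 3)) from ⟨f2, f3⟩)
    have hab : a < b := by linarith
    have hbc : b < c := by linarith
    clear f0 f1 f2 f3 hc hK hF1 hF2
    simp only [hf] at ha hb hcc
    have q1 : a ^ 2 + a * b + b ^ 2 + 2 * B * (a + b) + K = 0 := by
      apply mul_left_cancel₀ (sub_ne_zero.mpr hab.ne)
      linear_combination ha - hb
    have q2 : b ^ 2 + b * c + c ^ 2 + 2 * B * (b + c) + K = 0 := by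
      apply mul_left_cancel₀ (sub_ne_zero.mpr hbc.ne)
      linear_combination hb - hcc
    have q3 : a + b + c + 2 * B = 0 := by
      apply mul_left_cancel₀ (sub_ne_zero.mpr (hab.trans hbc).ne)
      linear_combination q1 - q2
    rw [Set.ncard_eq_three]
    refine ⟨a, b, c, hab.ne, (hab.trans hbc).ne, hbc.ne, ?_⟩
    ext z
    have key : z ^ 3 + 2 * B * z ^ 2 + K * z - D ^ 2 = (z - a) * (z - b) * (z - c) := by
      linear_combination ha + (z - a) * q1 + (z - a) * (z - b) * q3
    simp only [Set.mem_ofPred_eq, Set.mem_insert_iff, Set.mem_singleton_iff, key]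
    simp only [mul_eq_zero, sub_eq_zero, or_assoc]
    constructor
    · exact fun h => h.2
    · intro h
      refine ⟨?_, h⟩
      rcases h with h | h | h <;> rw [h] <;> linarith
end

section
/- Let a, b, c, x ∈ ℍₛ satisfy ax² + bx + c = 0, and set T = x + x̄ = 2Re(x) ∈ ℝ and N = I_x ∈ ℝ. Then (Ta + b)x = aN − c. If, moreover, I_{Ta+b} ≠ 0 (equivalently T²I_a + 2T·P_{a,b} + I_b ≠ 0), then the pair (T, N) satisfies the two real equations −I_a·N² + N(T²I_a + 2T·P_{a,b} + I_b + 2P_{a,c}) − I_c = 0 and I_a·T³ + 2P_{a,b}·T² + (2P_{a,c} + I_b − 2I_a·N)T − 2N·P_{a,b} + 2P_{b,c} = 0. -/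
open Quaternion

/-- `P_{x,y} = x₀y₀ + x₁y₁ − x₂y₂ − x₃y₃ = Re(ȳx)`. -/
def SplitQuat.P (x y : ℍ[ℝ,-1,1]) : ℝ :=
  x.re * y.re + x.imI * y.imI - x.imJ * y.imJ - x.imK * y.imK

open SplitQuat

/-- if `ax² + bx + c = 0` and `T = 2 Re x`, `N = I_x`, then
`(Ta + b)x = aN − c`; if moreover `I_{Ta+b} ≠ 0` (equivalently
`T²I_a + 2T P_{a,b} + I_b ≠ 0`), then `(T, N)` solves the two real equations
of system (18). -/
theorem stmt12 (a b c x : ℍ[ℝ,-1,1]) (h : a * x ^ 2 + b * x + c = 0) :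
    let T : ℝ := 2 * x.re
    let N : ℝ := Ix x
    (((T : ℝ) : ℍ[ℝ,-1,1]) * a + b) * x = a * ((N : ℝ) : ℍ[ℝ,-1,1]) - c ∧
    (Ix (((T : ℝ) : ℍ[ℝ,-1,1]) * a + b) ≠ 0 ↔
      T ^ 2 * Ix a + 2 * T * P a b + Ix b ≠ 0) ∧
    (Ix (((T : ℝ) : ℍ[ℝ,-1,1]) * a + b) ≠ 0 →
      -Ix a * N ^ 2 + N * (T ^ 2 * Ix a + 2 * T * P a b + Ix b + 2 * P a c) - Ix c = 0 ∧
      Ix a * T ^ 3 + 2 * P a b * T ^ 2 + (2 * P a c + Ix b - 2 * Ix a * N) * T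
        - 2 * N * P a b + 2 * P b c = 0) := by
  obtain ⟨a0, a1, a2, a3⟩ := a
  obtain ⟨b0, b1, b2, b3⟩ := b
  obtain ⟨c0, c1, c2, c3⟩ := c
  obtain ⟨x0, x1, x2, x3⟩ := x
  rw [QuaternionAlgebra.ext_iff] at h
  simp [pow_two] at h
  obtain ⟨h0, h1, h2, h3⟩ := h
  have e0 := eq_neg_of_add_eq_zero_right h0
  have e1 := eq_neg_of_add_eq_zero_right h1
  have e2 := eq_neg_of_add_eq_zero_right h2
  have e3 := eq_neg_of_add_eq_zero_right h3
  clear h0 h1 h2 h3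
  subst e0 e1 e2 e3
  intro T N
  have hT : T = 2 * x0 := rfl
  have hN : N = x0 ^ 2 + x1 ^ 2 - x2 ^ 2 - x3 ^ 2 := rfl
  clear_value T N
  refine ⟨?_, ?_, fun _ => ⟨?_, ?_⟩⟩
  · ext <;> simp <;> simp only [hT, hN] <;> ring
  · apply not_congr
    apply Eq.congr_left
    simp [Ix, P]
    ring
  · simp only [hT, hN, Ix, P]
    ring
  · simp only [hT, hN, Ix, P]
    ring
end

section
/- Let a = 1 + a₂j + a₃k ∈ ℍₛ with a₂² + a₃² = 1 (so that I_a = 0 and a is a nonzero zero divisor), and let c ∈ ℍₛ. Then there exists x ∈ ℍₛ with ax² + c = 0 if and only if ac = 2c. -/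
open Quaternion

/-- for `a = 1 + a₂j + a₃k` with `a₂² + a₃² = 1` (a nonzero zero
divisor) and any `c`, the equation `ax² + c = 0` has a solution iff `ac = 2c`. -/
theorem stmt14 (a₂ a₃ : ℝ) (ha : a₂ ^ 2 + a₃ ^ 2 = 1) (c : ℍ[ℝ,-1,1]) :
    let a : ℍ[ℝ,-1,1] := ⟨1, 0, a₂, a₃⟩
    (∃ x : ℍ[ℝ,-1,1], a * x ^ 2 + c = 0) ↔ a * c = 2 * c := by
  intro a
  have haa : a * a = 2 * a := by
    rw [two_mul]
    ext <;> simp [a] <;> linarith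
  constructor
  · rintro ⟨x, hx⟩
    have hc : c = -(a * x ^ 2) := (neg_eq_of_add_eq_zero_right hx).symm
    rw [hc, mul_neg, ← mul_assoc, haa, mul_neg, mul_assoc]
  · intro h
    obtain ⟨c0, c1, c2, c3⟩ := c
    rw [two_mul] at h
    have h2 := congrArg QuaternionAlgebra.imJ h
    have h3 := congrArg QuaternionAlgebra.imK h
    simp [a] at h2 h3
    have e2 : c2 = a₂ * c0 + a₃ * c1 := by linarith
    have e3 : c3 = a₃ * c0 - a₂ * c1 := by linarith
    subst e2 e3
    have hb : a₃ ^ 2 = 1 - a₂ ^ 2 := by linarith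
    have hb3 : a₃ ^ 3 = (1 - a₂ ^ 2) * a₃ := by rw [← hb]; ring
    refine ⟨⟨-c1 / 2, (1 + c0) / 2, (a₃ - c0 * a₃ + c1 * a₂) / 2,
      (-a₂ + c0 * a₂ + c1 * a₃) / 2⟩, ?_⟩
    rw [pow_two]
    ext <;> simp [a] <;> ring_nf <;> simp only [hb, hb3] <;> ring
end

section
/- Let a = 1 + a₂j + a₃k ∈ ℍₛ with a₂² + a₃² = 1, and let c = c₀ + c₂j + c₃k ∈ ℍₛ (i.e. the i-coefficient of c is zero) satisfy ac = 2c. Then: (1) every x = x₁i + x₂j + x₃k with x₁,x₂,x₃ ∈ ℝ and −x₁² + x₂² + x₃² + c₀ = 0 satisfies ax² + c = 0; and (2) if additionally c₀ ≤ 0, then for all x₂, x₃ ∈ ℝ and each choice of sign, x = (±√(−c₀) − a₂x₂ − a₃x₃) + (a₂x₃ − a₃x₂)i + x₂j + x₃k satisfies ax² + c = 0. -/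
open Quaternion

/-- explicit solutions of `ax² + c = 0` for
`a = 1 + a₂j + a₃k` (`a₂² + a₃² = 1`) and `c = c₀ + c₂j + c₃k` with `ac = 2c`:
(1) every purely imaginary `x = x₁i + x₂j + x₃k` with
`−x₁² + x₂² + x₃² + c₀ = 0` is a solution; (2) if `c₀ ≤ 0`, then for all
`x₂, x₃` and either sign, `x = (±√(−c₀) − a₂x₂ − a₃x₃) + (a₂x₃ − a₃x₂)i + x₂j + x₃k`
is a solution. -/
theorem stmt15 (a₂ a₃ c₀ c₂ c₃ : ℝ) (ha : a₂ ^ 2 + a₃ ^ 2 = 1)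
    (hac : (⟨1, 0, a₂, a₃⟩ : ℍ[ℝ,-1,1]) * (⟨c₀, 0, c₂, c₃⟩ : ℍ[ℝ,-1,1])
      = 2 * (⟨c₀, 0, c₂, c₃⟩ : ℍ[ℝ,-1,1])) :
    let a : ℍ[ℝ,-1,1] := ⟨1, 0, a₂, a₃⟩
    let c : ℍ[ℝ,-1,1] := ⟨c₀, 0, c₂, c₃⟩
    (∀ x₁ x₂ x₃ : ℝ, -x₁ ^ 2 + x₂ ^ 2 + x₃ ^ 2 + c₀ = 0 →
      a * (⟨0, x₁, x₂, x₃⟩ : ℍ[ℝ,-1,1]) ^ 2 + c = 0) ∧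
    (c₀ ≤ 0 → ∀ x₂ x₃ : ℝ, ∀ ε : ℝ, (ε = 1 ∨ ε = -1) →
      a * (⟨ε * Real.sqrt (-c₀) - a₂ * x₂ - a₃ * x₃,
            a₂ * x₃ - a₃ * x₂, x₂, x₃⟩ : ℍ[ℝ,-1,1]) ^ 2 + c = 0) := by
  intro a c
  have h2 : c₂ = a₂ * c₀ := by
    have := congrArg QuaternionAlgebra.imJ hac
    rw [two_mul] at this
    simp at this
    linarith
  have h3 : c₃ = a₃ * c₀ := by
    have := congrArg QuaternionAlgebra.imK hac
    rw [two_mul] at this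
    simp at this
    linarith
  subst h2 h3
  refine ⟨fun x₁ x₂ x₃ h => ?_, fun hc x₂ x₃ ε hε => ?_⟩
  · have hx : (⟨0, x₁, x₂, x₃⟩ : ℍ[ℝ,-1,1]) ^ 2 = ⟨-c₀, 0, 0, 0⟩ := by
      rw [pow_two]
      ext <;> simp <;> linarith
    rw [hx]
    ext <;> simp [a, c]
  · have hs : (ε * Real.sqrt (-c₀)) ^ 2 = -c₀ := by
      rw [mul_pow, Real.sq_sqrt (by linarith)]
      rcases hε with rfl | rfl <;> ring
    generalize ε * Real.sqrt (-c₀) = s at hs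
    have hx : a * (⟨s - a₂ * x₂ - a₃ * x₃, a₂ * x₃ - a₃ * x₂, x₂, x₃⟩ : ℍ[ℝ,-1,1])
        = s • a := by
      ext <;> simp [a]
      · ring
      · linear_combination (-x₂) * ha
      · linear_combination (-x₃) * ha
    rw [pow_two, ← mul_assoc, hx, smul_mul_assoc, hx, smul_smul, ← pow_two, hs]
    ext <;> simp [a, c] <;> ring
end

section
/- Let a = 1 + a₂j + a₃k with a₂² + a₃² = 1, let b = b₁i + b₂j + b₃k with a₂b₂ + a₃b₃ = 0 (equivalently P_{a,b} = 0), and let c = c₀ + c₁i + c₂j + c₃k ∈ ℍₛ. Set δ = a₂b₃ − a₃b₂ + b₁, t₁ = c₂ − c₀a₂ − a₃c₁, t₂ = c₃ − c₀a₃ + a₂c₁. If x = x₀ + x₁i + x₂j + x₃k ∈ ℍₛ satisfies ax² + bx + c = 0, then (b₂ − a₃b₁)x₀ + (a₂b₁ + b₃)x₁ − δx₃ + t₁ = 0 and (a₂b₁ + b₃)x₀ + (a₃b₁ − b₂)x₁ + δx₂ + t₂ = 0. -/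
open Quaternion

/-- Proposition 5.1: for `a = 1 + a₂j + a₃k` with
`a₂² + a₃² = 1`, `b = b₁i + b₂j + b₃k` with `a₂b₂ + a₃b₃ = 0` (i.e.
`P_{a,b} = 0`), any solution `x` of `ax² + bx + c = 0` satisfies the two linear
relations with `δ = a₂b₃ − a₃b₂ + b₁`, `t₁ = c₂ − c₀a₂ − a₃c₁`,
`t₂ = c₃ − c₀a₃ + a₂c₁`. -/
theorem stmt16 (a₂ a₃ b₁ b₂ b₃ c₀ c₁ c₂ c₃ : ℝ)
    (ha : a₂ ^ 2 + a₃ ^ 2 = 1) (hab : a₂ * b₂ + a₃ * b₃ = 0)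
    (x : ℍ[ℝ,-1,1])
    (hx : (⟨1, 0, a₂, a₃⟩ : ℍ[ℝ,-1,1]) * x ^ 2
        + (⟨0, b₁, b₂, b₃⟩ : ℍ[ℝ,-1,1]) * x + (⟨c₀, c₁, c₂, c₃⟩ : ℍ[ℝ,-1,1]) = 0) :
    let δ : ℝ := a₂ * b₃ - a₃ * b₂ + b₁
    let t₁ : ℝ := c₂ - c₀ * a₂ - a₃ * c₁
    let t₂ : ℝ := c₃ - c₀ * a₃ + a₂ * c₁
    (b₂ - a₃ * b₁) * x.re + (a₂ * b₁ + b₃) * x.imI - δ * x.imK + t₁ = 0 ∧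
    (a₂ * b₁ + b₃) * x.re + (a₃ * b₁ - b₂) * x.imI + δ * x.imJ + t₂ = 0 := by
  obtain ⟨x0, x1, x2, x3⟩ := x
  intro δ t₁ t₂
  have h0 := congrArg QuaternionAlgebra.re hx
  have h1 := congrArg QuaternionAlgebra.imI hx
  have h2 := congrArg QuaternionAlgebra.imJ hx
  have h3 := congrArg QuaternionAlgebra.imK hx
  simp [pow_two] at h0 h1 h2 h3
  simp only [δ, t₁, t₂]
  constructor
  · linear_combination h2 - a₂ * h0 - a₃ * h1 + 2 * x0 * x2 * ha + x2 * hab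
  · linear_combination h3 - a₃ * h0 + a₂ * h1 + 2 * x0 * x3 * ha + x3 * hab
end

section
/- Let a = 1 + a₂j + a₃k with a₂² + a₃² = 1, let b = b₁i + b₂j + b₃k ≠ 0 with a₂b₂ + a₃b₃ = 0 (i.e. P_{a,b} = 0) and b₁ = a₃b₂ − a₂b₃ (i.e. δ := a₂b₃ − a₃b₂ + b₁ = 0), and let c ∈ ℍₛ. Then the equation ax² + bx + c = 0 has a solution x ∈ ℍₛ if and only if ac = 2c. (Under these hypotheses I_{2x₀a+b} = I_b = 0 for every x₀ ∈ ℝ, so every solution automatically satisfies 2Re(x)·a + b ∈ Z(ℍₛ).) -/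
open Quaternion

/-- Theorem 5.3 solvability: for `a = 1 + a₂j + a₃k` with
`a₂² + a₃² = 1`, `b = b₁i + b₂j + b₃k ≠ 0` with `a₂b₂ + a₃b₃ = 0` and
`b₁ = a₃b₂ − a₂b₃` (i.e. `δ = 0`), and any `c`, the equation `ax² + bx + c = 0`
has a solution iff `ac = 2c`. -/
theorem stmt17 (a₂ a₃ b₁ b₂ b₃ : ℝ) (c : ℍ[ℝ,-1,1])
    (ha : a₂ ^ 2 + a₃ ^ 2 = 1)
    (hb : (⟨0, b₁, b₂, b₃⟩ : ℍ[ℝ,-1,1]) ≠ 0)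
    (hab : a₂ * b₂ + a₃ * b₃ = 0)
    (hδ : b₁ = a₃ * b₂ - a₂ * b₃) :
    let a : ℍ[ℝ,-1,1] := ⟨1, 0, a₂, a₃⟩
    let b : ℍ[ℝ,-1,1] := ⟨0, b₁, b₂, b₃⟩
    (∃ x : ℍ[ℝ,-1,1], a * x ^ 2 + b * x + c = 0) ↔ a * c = 2 * c := by
  intro a b
  have h2 : b₂ = b₁ * a₃ := by
    linear_combination (-b₂) * ha + a₂ * hab - a₃ * hδ
  have h3 : b₃ = -(b₁ * a₂) := by
    linear_combination (-b₃) * ha + a₃ * hab + a₂ * hδ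
  have h1 : b₁ ≠ 0 := by
    rintro rfl
    apply hb
    rw [h2, h3]
    ext <;> simp
  clear hδ hab hb
  subst h2 h3
  have haa : a * a = a + a := by
    ext <;> simp [a] <;> first | linear_combination ha | ring
  have hab : a * b = b + b := by
    ext <;> simp [a, b]
    · ring
    · linear_combination b₁ * ha
    · ring
    · ring
  constructor
  · rintro ⟨x, hx⟩
    have hc : c = -(a * x ^ 2 + b * x) := (neg_eq_of_add_eq_zero_right hx).symm
    rw [hc, two_mul, mul_neg, mul_add, ← mul_assoc, ← mul_assoc, haa, hab]
    noncomm_ring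
  · intro hc
    let d : ℍ[ℝ,-1,1] := ⟨0, 1 / (4 * b₁), -a₃ / (4 * b₁), a₂ / (4 * b₁)⟩
    have had : a * d = 0 := by
      ext <;> simp [a, d] <;> field_simp
      · ring
      · linear_combination -ha
      · ring
      · ring
    have hbd : b * d + b * d = -a := by
      ext <;> simp [a, b, d] <;> field_simp
      · linear_combination -2 * ha
      · ring
      · ring
      · ring
    refine ⟨d * c, ?_⟩
    have e1 : a * (d * c) ^ 2 = 0 := by
      rw [pow_two, ← mul_assoc, ← mul_assoc a d c, had]; simp
    rw [e1, zero_add]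
    have e2 : (2:ℝ) • (b * (d * c) + c) = 0 := by
      rw [two_smul]
      have : b * (d * c) + c + (b * (d * c) + c) = (b * d + b * d) * c + 2 * c := by
        noncomm_ring
      rw [this, hbd, ← hc]; simp
    exact (smul_eq_zero.mp e2).resolve_left two_ne_zero
end

section
/- Let a = 1 + a₂j + a₃k with a₂² + a₃² = 1, b = b₁i + b₂j + b₃k, and c = c₀ + c₁i + c₂j + c₃k in ℍₛ, and assume P_{a,b} = 0, I_b ≠ 0, I_b + 2P_{a,c} = 0, I_c = 0, and P_{b,c} = 0. Set δ = a₂b₃ − a₃b₂ + b₁, t₁ = c₂ − c₀a₂ − a₃c₁, t₂ = c₃ − c₀a₃ + a₂c₁. Then δ ≠ 0, and the following five identities hold: ((a₂b₁+b₃)² + (b₂−a₃b₁)²)/δ² = 1; (a₃(b₂−a₃b₁) − a₂(a₂b₁+b₃))/δ = −1; (a₃(a₂b₁+b₃) + a₂(b₂−a₃b₁))/δ = 0; (2t₂(a₂b₁+b₃) + 2t₁(b₂−a₃b₁))/δ² + (b₃(b₂−a₃b₁) − b₂(a₂b₁+b₃) + 2a₃t₁ − 2a₂t₂)/δ = 0;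 and (2t₂(a₃b₁−b₂) + 2t₁(a₂b₁+b₃))/δ² + ((a₂b₁+b₃)b₃ − b₂(a₃b₁−b₂))/δ − b₁ = 0. -/
open Quaternion

open SplitQuat

/-- Proposition 5.3: under `P_{a,b} = 0`, `I_b ≠ 0`,
`I_b + 2P_{a,c} = 0`, `I_c = 0`, `P_{b,c} = 0`, we have `δ ≠ 0` and the five
identities hold. -/
theorem stmt18 (a₂ a₃ b₁ b₂ b₃ c₀ c₁ c₂ c₃ : ℝ)
    (ha : a₂ ^ 2 + a₃ ^ 2 = 1)
    (hPab : P (⟨1, 0, a₂, a₃⟩ : ℍ[ℝ,-1,1]) (⟨0, b₁, b₂, b₃⟩ : ℍ[ℝ,-1,1]) = 0)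
    (hIb : Ix (⟨0, b₁, b₂, b₃⟩ : ℍ[ℝ,-1,1]) ≠ 0)
    (hIbPac : Ix (⟨0, b₁, b₂, b₃⟩ : ℍ[ℝ,-1,1])
        + 2 * P (⟨1, 0, a₂, a₃⟩ : ℍ[ℝ,-1,1]) (⟨c₀, c₁, c₂, c₃⟩ : ℍ[ℝ,-1,1]) = 0)
    (hIc : Ix (⟨c₀, c₁, c₂, c₃⟩ : ℍ[ℝ,-1,1]) = 0)
    (hPbc : P (⟨0, b₁, b₂, b₃⟩ : ℍ[ℝ,-1,1]) (⟨c₀, c₁, c₂, c₃⟩ : ℍ[ℝ,-1,1]) = 0) :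
    let δ : ℝ := a₂ * b₃ - a₃ * b₂ + b₁
    let t₁ : ℝ := c₂ - c₀ * a₂ - a₃ * c₁
    let t₂ : ℝ := c₃ - c₀ * a₃ + a₂ * c₁
    δ ≠ 0 ∧
    ((a₂ * b₁ + b₃) ^ 2 + (b₂ - a₃ * b₁) ^ 2) / δ ^ 2 = 1 ∧
    (a₃ * (b₂ - a₃ * b₁) - a₂ * (a₂ * b₁ + b₃)) / δ = -1 ∧
    (a₃ * (a₂ * b₁ + b₃) + a₂ * (b₂ - a₃ * b₁)) / δ = 0 ∧
    (2 * t₂ * (a₂ * b₁ + b₃) + 2 * t₁ * (b₂ - a₃ * b₁)) / δ ^ 2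
      + (b₃ * (b₂ - a₃ * b₁) - b₂ * (a₂ * b₁ + b₃) + 2 * a₃ * t₁ - 2 * a₂ * t₂) / δ = 0 ∧
    (2 * t₂ * (a₃ * b₁ - b₂) + 2 * t₁ * (a₂ * b₁ + b₃)) / δ ^ 2
      + ((a₂ * b₁ + b₃) * b₃ - b₂ * (a₃ * b₁ - b₂)) / δ - b₁ = 0 := by
  intro δ t₁ t₂
  simp only [P, Ix] at hPab hIb hIbPac hIc hPbc
  have hab : a₂ * b₂ + a₃ * b₃ = 0 := by linarith
  obtain ⟨s, hs⟩ : ∃ s, s = a₂ * b₃ - a₃ * b₂ := ⟨_, rfl⟩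
  have h2 : b₂ = -a₃ * s := by
    rw [hs]; linear_combination (-b₂) * ha + a₂ * hab
  have h3 : b₃ = a₂ * s := by
    rw [hs]; linear_combination (-b₃) * ha + a₃ * hab
  have hδ : δ = s + b₁ := by simp only [δ, hs]
  have hI : (0:ℝ) ^ 2 + b₁ ^ 2 - b₂ ^ 2 - b₃ ^ 2 = (b₁ - s) * (s + b₁) := by
    rw [h2, h3]; linear_combination (-s ^ 2) * ha
  have hd : δ ≠ 0 := by
    intro h
    apply hIb
    rw [hI, ← hδ, h, mul_zero]
  have e1 : a₂ * b₁ + b₃ = a₂ * δ := by rw [hδ, h3]; ring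
  have e2 : b₂ - a₃ * b₁ = -a₃ * δ := by rw [hδ, h2]; ring
  have e3 : a₃ * b₁ - b₂ = a₃ * δ := by rw [hδ, h2]; ring
  have ht : 2 * (t₂ * a₃ + t₁ * a₂) = (b₁ - s) * δ := by
    rw [hI, ← hδ] at hIbPac
    simp only [t₁, t₂]
    linear_combination (-2 * c₀) * ha - hIbPac
  rw [e1, e2, e3]
  clear_value δ t₁ t₂
  refine ⟨hd, ?_, ?_, ?_, ?_, ?_⟩
  · rw [div_eq_iff (pow_ne_zero 2 hd)]; linear_combination δ ^ 2 * ha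
  · rw [div_eq_iff hd]; linear_combination (-δ) * ha
  · rw [div_eq_iff hd]; ring
  · field_simp
    linear_combination (-δ) * hab
  · field_simp
    linear_combination ht - δ * hs
end

section
/- Let a = 1 + a₂j + a₃k with a₂² + a₃² = 1, b = b₁i + b₂j + b₃k with P_{a,b} = 0 and I_b ≠ 0, and c = c₀ + c₁i + c₂j + c₃k in ℍₛ with I_b + 2P_{a,c} = 0, I_c = 0, and P_{b,c} = 0. Set δ = a₂b₃ − a₃b₂ + b₁ (which is nonzero), t₁ = c₂ − c₀a₂ − a₃c₁, t₂ = c₃ − c₀a₃ + a₂c₁, and F = t₁² + t₂² + (b₃t₁ − b₂t₂)δ + c₀δ². If F = 0, then for all x₀, x₁ ∈ ℝ, the element x = x₀ + x₁i + x₂j + x₃k with x₂ = −t₂/δ − ((a₂b₁+b₃)/δ)x₀ − ((a₃b₁−b₂)/δ)x₁ and x₃ = t₁/δ + ((b₂−a₃b₁)/δ)x₀ + ((a₂b₁+b₃)/δ)x₁ satisfies ax² + bx + c = 0. Conversely, if ax² + bx + c = 0 has a solution x with I_{2Re(x)·a + b} ≠ 0, then F = 0. -/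
open Quaternion

open SplitQuat

/-- Theorem 5.6: under `P_{a,b} = 0`, `I_b ≠ 0`,
`I_b + 2P_{a,c} = 0`, `I_c = 0`, `P_{b,c} = 0`, the quantity `δ` is nonzero;
if `F = t₁² + t₂² + (b₃t₁ − b₂t₂)δ + c₀δ² = 0` then for all `x₀, x₁` the
element `x = x₀ + x₁i + x₂j + x₃k` (with the stated `x₂, x₃`) is a root of
`ax² + bx + c = 0`; conversely the existence of a root `x` with
`I_{2Re(x)·a + b} ≠ 0` forces `F = 0`. -/
theorem stmt19 (a₂ a₃ b₁ b₂ b₃ c₀ c₁ c₂ c₃ : ℝ)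
    (ha : a₂ ^ 2 + a₃ ^ 2 = 1)
    (hPab : P (⟨1, 0, a₂, a₃⟩ : ℍ[ℝ,-1,1]) (⟨0, b₁, b₂, b₃⟩ : ℍ[ℝ,-1,1]) = 0)
    (hIb : Ix (⟨0, b₁, b₂, b₃⟩ : ℍ[ℝ,-1,1]) ≠ 0)
    (hIbPac : Ix (⟨0, b₁, b₂, b₃⟩ : ℍ[ℝ,-1,1])
        + 2 * P (⟨1, 0, a₂, a₃⟩ : ℍ[ℝ,-1,1]) (⟨c₀, c₁, c₂, c₃⟩ : ℍ[ℝ,-1,1]) = 0)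
    (hIc : Ix (⟨c₀, c₁, c₂, c₃⟩ : ℍ[ℝ,-1,1]) = 0)
    (hPbc : P (⟨0, b₁, b₂, b₃⟩ : ℍ[ℝ,-1,1]) (⟨c₀, c₁, c₂, c₃⟩ : ℍ[ℝ,-1,1]) = 0) :
    let a : ℍ[ℝ,-1,1] := ⟨1, 0, a₂, a₃⟩
    let b : ℍ[ℝ,-1,1] := ⟨0, b₁, b₂, b₃⟩
    let c : ℍ[ℝ,-1,1] := ⟨c₀, c₁, c₂, c₃⟩
    let δ : ℝ := a₂ * b₃ - a₃ * b₂ + b₁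
    let t₁ : ℝ := c₂ - c₀ * a₂ - a₃ * c₁
    let t₂ : ℝ := c₃ - c₀ * a₃ + a₂ * c₁
    let F : ℝ := t₁ ^ 2 + t₂ ^ 2 + (b₃ * t₁ - b₂ * t₂) * δ + c₀ * δ ^ 2
    δ ≠ 0 ∧
    (F = 0 → ∀ x₀ x₁ : ℝ,
      a * (⟨x₀, x₁,
          -t₂ / δ - ((a₂ * b₁ + b₃) / δ) * x₀ - ((a₃ * b₁ - b₂) / δ) * x₁,
          t₁ / δ + ((b₂ - a₃ * b₁) / δ) * x₀ + ((a₂ * b₁ + b₃) / δ) * x₁⟩ : ℍ[ℝ,-1,1]) ^ 2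
        + b * (⟨x₀, x₁,
          -t₂ / δ - ((a₂ * b₁ + b₃) / δ) * x₀ - ((a₃ * b₁ - b₂) / δ) * x₁,
          t₁ / δ + ((b₂ - a₃ * b₁) / δ) * x₀ + ((a₂ * b₁ + b₃) / δ) * x₁⟩ : ℍ[ℝ,-1,1])
        + c = 0) ∧
    ((∃ x : ℍ[ℝ,-1,1], a * x ^ 2 + b * x + c = 0 ∧
        Ix (((2 * x.re : ℝ) : ℍ[ℝ,-1,1]) * a + b) ≠ 0) → F = 0) := by
  intro a b c δ t₁ t₂ F
  simp only [SplitQuat.P, SplitQuat.Ix] at hPab hIb hIbPac hIc hPbc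
  obtain ⟨s, hs⟩ : ∃ s, s = a₂ * b₃ - a₃ * b₂ := ⟨_, rfl⟩
  obtain ⟨p, hp⟩ : ∃ p, p = a₂ * c₂ + a₃ * c₃ := ⟨_, rfl⟩
  obtain ⟨q, hq⟩ : ∃ q, q = a₂ * c₃ - a₃ * c₂ := ⟨_, rfl⟩
  have hb2 : b₂ = -a₃ * s := by
    rw [hs]; linear_combination -b₂ * ha - a₂ * hPab
  have hb3 : b₃ = a₂ * s := by
    rw [hs]; linear_combination -b₃ * ha - a₃ * hPab
  have hc2 : c₂ = a₂ * p - a₃ * q := by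
    rw [hp, hq]; linear_combination -c₂ * ha
  have hc3 : c₃ = a₃ * p + a₂ * q := by
    rw [hp, hq]; linear_combination -c₃ * ha
  clear hs hp hq
  subst hb2 hb3 hc2 hc3
  have hδ : δ = s + b₁ := by
    simp only [δ]; linear_combination s * ha
  have hne : (b₁ - s) * (s + b₁) ≠ 0 := by
    intro h; apply hIb; linear_combination h - s ^ 2 * ha
  have hd : s + b₁ ≠ 0 := right_ne_zero_of_mul hne
  have he : b₁ - s ≠ 0 := left_ne_zero_of_mul hne
  obtain ⟨d, hdd⟩ : ∃ d, d = s + b₁ := ⟨_, rfl⟩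
  obtain ⟨m, hm⟩ : ∃ m, m = (b₁ - s) / 2 := ⟨_, rfl⟩
  have hb1 : b₁ = d / 2 + m := by rw [hdd, hm]; ring
  have hs : s = d / 2 - m := by rw [hdd, hm]; ring
  have hm0 : m ≠ 0 := by
    intro h; apply he; linear_combination 2 * h - 2 * hm
  rw [← hdd] at hd hδ
  clear hdd hm he hne hIb
  subst hb1 hs
  obtain ⟨n, hn⟩ : ∃ n, n = (q + c₁) / d := ⟨_, rfl⟩
  have hv : q + c₁ = d * n := by rw [hn]; field_simp
  clear hn
  have hpp : p = c₀ + d * m := by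
    linear_combination (-1/2) * hIbPac - (1/2) * (d / 2 - m) ^ 2 * ha - p * ha
  have hw : c₁ - q = -2 * m * n := by
    apply mul_left_cancel₀ hd
    linear_combination 2 * hPbc - 2 * m * hv + 2 * (d / 2 - m) * q * ha
  have hc1 : c₁ = d * n / 2 - m * n := by linear_combination (hv + hw) / 2
  have hqq : q = d * n / 2 + m * n := by linear_combination (hv - hw) / 2
  clear hv hw
  subst hpp hc1 hqq
  have hc0 : c₀ = -n ^ 2 - d * m / 2 := by
    have : (2 * d * m) * c₀ = (2 * d * m) * (-n ^ 2 - d * m / 2) := by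
      linear_combination -hIc - ((c₀ + d * m) ^ 2 + (d * n / 2 + m * n) ^ 2) * ha
    exact mul_left_cancel₀ (by positivity) this
  subst hc0
  have ht1 : t₁ = d * (a₂ * m - a₃ * n) := by simp only [t₁]; ring
  have ht2 : t₂ = d * (a₃ * m + a₂ * n) := by simp only [t₂]; ring
  have hF : F = 0 := by
    simp only [F]
    rw [ht1, ht2, hδ]
    linear_combination (d ^ 2 * (m ^ 2 + n ^ 2) + d ^ 2 * m * (d / 2 - m)) * ha
  refine ⟨by rw [hδ]; exact hd, fun hF0 x₀ x₁ => ?_, fun _ => hF⟩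
  have e2 : -t₂ / δ - ((a₂ * (d / 2 + m) + a₂ * (d / 2 - m)) / δ) * x₀
      - ((a₃ * (d / 2 + m) - -a₃ * (d / 2 - m)) / δ) * x₁
      = -(a₃ * m + a₂ * n) - a₂ * x₀ - a₃ * x₁ := by
    rw [ht2, hδ]; field_simp; ring
  have e3 : t₁ / δ + ((-a₃ * (d / 2 - m) - a₃ * (d / 2 + m)) / δ) * x₀
      + ((a₂ * (d / 2 + m) + a₂ * (d / 2 - m)) / δ) * x₁
      = (a₂ * m - a₃ * n) - a₃ * x₀ + a₂ * x₁ := by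
    rw [ht1, hδ]; field_simp; ring
  rw [e2, e3]
  clear e2 e3 hF0 hF ht1 ht2 hIbPac hIc hPbc hPab hδ
  clear F t₁ t₂ δ
  have h3 : a₃ ^ 2 = 1 - a₂ ^ 2 := by linear_combination ha
  simp only [a, b, c, pow_two (⟨_, _, _, _⟩ : ℍ[ℝ,-1,1])]
  ext <;> simp
  · grind
  · grind
  · grind
  · grind
end
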